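/- arXiv:2304.07428 — 6 statements merged into one kernel-verified Lean document; each statement's English description precedes it below -/
import Mathlib

section
/- Let X̂ and X be measurable spaces, p̂ a probability measure on X̂, p a probability measure on X, R ⊆ X̂ × X a measurable set, δ ∈ [0,1], and let v be a sub-probability coupling of p̂ and p over R with respect to δ such that v(X̂ × X) < 1. Let π̂ and π denote the two marginals of v, i.e. π̂(A) = v(A × X) and π(B) = v(X̂ × B); since π̂ ≤ p̂ and π ≤ p, the measures p̂ − π̂ and p − π are well defined. Define the measure v̄ on X̂ × X by v̄ := v + (1 − v(X̂ × X))⁻¹ · ((p̂ − π̂) ⊗ (p − π)), where ⊗ denotes the product measure. Then v̄ is a probability measure on X̂ × X whose first marginal equals p̂ and whose second marginal equals p; moreover v̄(E) ≥ v(E) for every measurable E ⊆ X̂ × X, and consequently v̄(R) ≥ 1 − δ. -/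
open MeasureTheory Set

/-- The completion of a sub-probability coupling `v` of `phat` and `p` to a full coupling:
`v̄ := v + (1 − v(univ))⁻¹ • ((p̂ − π̂) ⊗ (p − π))`, where `π̂` and `π` are the marginals of `v`. -/
noncomputable def fullCoupling {Xh X : Type*} [MeasurableSpace Xh] [MeasurableSpace X]
    (phat : Measure Xh) (p : Measure X) (v : Measure (Xh × X)) : Measure (Xh × X) :=
  v + (1 - v univ)⁻¹ • ((phat - v.map Prod.fst).prod (p - v.map Prod.snd))

/-- **Recovering a probability coupling from a sub-probability coupling.**
If `v` is a sub-probability coupling of the probability measures `phat` and `p` over the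
measurable relation `R` with respect to `δ ∈ [0,1]`, and `v(univ) < 1`, then the completed
measure `v̄` is a probability measure with marginals `phat` and `p`, dominates `v`, and
satisfies `v̄(R) ≥ 1 − δ`. -/
theorem fullCoupling_isCoupling {Xh X : Type*} [MeasurableSpace Xh] [MeasurableSpace X]
    (phat : Measure Xh) (p : Measure X)
    [IsProbabilityMeasure phat] [IsProbabilityMeasure p]
    (R : Set (Xh × X)) (hR : MeasurableSet R)
    (δ : ℝ) (hδ0 : 0 ≤ δ) (hδ1 : δ ≤ 1)
    (v : Measure (Xh × X))
    (hv1 : ENNReal.ofReal (1 - δ) ≤ v univ)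
    (hv2 : v univ = v R)
    (hv3 : ∀ A : Set Xh, MeasurableSet A → v (A ×ˢ (univ : Set X)) ≤ phat A)
    (hv4 : ∀ A : Set X, MeasurableSet A → v ((univ : Set Xh) ×ˢ A) ≤ p A)
    (hlt : v univ < 1) :
    fullCoupling phat p v univ = 1 ∧
    (fullCoupling phat p v).map Prod.fst = phat ∧
    (fullCoupling phat p v).map Prod.snd = p ∧
    (∀ E : Set (Xh × X), MeasurableSet E → v E ≤ fullCoupling phat p v E) ∧
    ENNReal.ofReal (1 - δ) ≤ fullCoupling phat p v R := by
  have hfin : IsFiniteMeasure v := ⟨hlt.trans ENNReal.one_lt_top⟩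
  have h1 : v.map Prod.fst ≤ phat := by
    refine Measure.le_iff.2 fun A hA => ?_
    rw [Measure.map_apply measurable_fst hA, ← prod_univ]
    exact hv3 A hA
  have h2 : v.map Prod.snd ≤ p := by
    refine Measure.le_iff.2 fun A hA => ?_
    rw [Measure.map_apply measurable_snd hA, ← univ_prod]
    exact hv4 A hA
  have u1 : (phat - v.map Prod.fst) univ = 1 - v univ := by
    rw [Measure.sub_apply MeasurableSet.univ h1, Measure.map_apply measurable_fst MeasurableSet.univ,
      measure_univ, preimage_univ]
  have u2 : (p - v.map Prod.snd) univ = 1 - v univ := by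
    rw [Measure.sub_apply MeasurableSet.univ h2, Measure.map_apply measurable_snd MeasurableSet.univ,
      measure_univ, preimage_univ]
  have hc : (1 - v univ)⁻¹ * (1 - v univ) = 1 :=
    ENNReal.inv_mul_cancel (tsub_pos_of_lt hlt).ne' (ENNReal.sub_ne_top ENNReal.one_ne_top)
  have m1 : (fullCoupling phat p v).map Prod.fst = phat := by
    rw [fullCoupling, Measure.map_add _ _ measurable_fst, Measure.map_smul,
      Measure.map_fst_prod, u2, smul_smul, hc, one_smul, add_comm]
    exact Measure.sub_add_cancel_of_le h1
  have m2 : (fullCoupling phat p v).map Prod.snd = p := by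
    rw [fullCoupling, Measure.map_add _ _ measurable_snd, Measure.map_smul,
      Measure.map_snd_prod, u1, smul_smul, hc, one_smul, add_comm]
    exact Measure.sub_add_cancel_of_le h2
  have hle : ∀ E : Set (Xh × X), v E ≤ fullCoupling phat p v E := by
    intro E
    rw [fullCoupling, Measure.add_apply]
    exact le_self_add
  refine ⟨?_, m1, m2, fun E _ => hle E, (hv1.trans hv2.le).trans (hle R)⟩
  have := congrArg (fun m => m univ) m1
  simpa [Measure.map_apply measurable_fst MeasurableSet.univ] using this
end

section
/- Let X̂ and X be standard Borel measurable spaces, p̂ a probability measure on X̂, p a probability measure on X, R ⊆ X̂ × X measurable, δ ∈ [0,1], and let v be a sub-probability coupling of p̂ and p over R with respect to δ with v(X̂ × X) < 1. Then there exists a Markov kernel s from X to X̂ such that the measure t_× on X̂ × X defined by t_×(E) := ∫_X s(x)({x̂ : (x̂, x) ∈ E}) p(dx) for measurable E ⊆ X̂ × X is a probability measure whose first marginal equals p̂ and whose second marginal equals p, and which satisfies t_×(E) ≥ v(E) for every measurable E ⊆ X̂ × X. -/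
open MeasureTheory Set ProbabilityTheory

/-- **Existence of a valid control refinement (measure level).**
Given a sub-probability coupling `v` of probability measures `phat` (on a standard Borel
space `Xh`) and `p` (on a standard Borel space `X`) over a measurable relation `R` with
respect to `δ ∈ [0,1]`, with `v(univ) < 1`, there exists a Markov kernel `s : X → P(Xh)`
such that the measure `t` on `Xh × X` defined by
`t(E) = ∫ s(x)({x̂ : (x̂, x) ∈ E}) p(dx)` is a probability measure with first marginal
`phat` and second marginal `p`, dominating `v`. -/
theorem exists_valid_refinement {Xh X : Type*}
    [MeasurableSpace Xh] [StandardBorelSpace Xh]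
    [MeasurableSpace X] [StandardBorelSpace X]
    (phat : Measure Xh) (p : Measure X)
    [IsProbabilityMeasure phat] [IsProbabilityMeasure p]
    (R : Set (Xh × X)) (hR : MeasurableSet R)
    (δ : ℝ) (hδ0 : 0 ≤ δ) (hδ1 : δ ≤ 1)
    (v : Measure (Xh × X))
    (hv1 : ENNReal.ofReal (1 - δ) ≤ v univ)
    (hv2 : v univ = v R)
    (hv3 : ∀ A : Set Xh, MeasurableSet A → v (A ×ˢ (univ : Set X)) ≤ phat A)
    (hv4 : ∀ A : Set X, MeasurableSet A → v ((univ : Set Xh) ×ˢ A) ≤ p A)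
    (hlt : v univ < 1) :
    ∃ (s : Kernel X Xh), IsMarkovKernel s ∧
      ∃ t : Measure (Xh × X),
        (∀ E : Set (Xh × X), MeasurableSet E →
          t E = ∫⁻ x, s x {xh | (xh, x) ∈ E} ∂p) ∧
        t univ = 1 ∧
        t.map Prod.fst = phat ∧
        t.map Prod.snd = p ∧
        (∀ E : Set (Xh × X), MeasurableSet E → v E ≤ t E) := by
  have : IsFiniteMeasure v := ⟨hlt.trans ENNReal.one_lt_top⟩
  have hXh : Nonempty Xh := nonempty_of_isProbabilityMeasure phat
  have h1 : v.map Prod.fst ≤ phat := by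
    refine Measure.le_iff.2 fun A hA => ?_
    rw [Measure.map_apply measurable_fst hA, ← prod_univ]
    exact hv3 A hA
  have h2 : v.map Prod.snd ≤ p := by
    refine Measure.le_iff.2 fun A hA => ?_
    rw [Measure.map_apply measurable_snd hA, ← univ_prod]
    exact hv4 A hA
  have ha : (phat - v.map Prod.fst) univ = 1 - v univ := by
    rw [Measure.sub_apply MeasurableSet.univ h1, measure_univ,
      Measure.map_apply measurable_fst MeasurableSet.univ, preimage_univ]
  have hb : (p - v.map Prod.snd) univ = 1 - v univ := by
    rw [Measure.sub_apply MeasurableSet.univ h2, measure_univ,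
      Measure.map_apply measurable_snd MeasurableSet.univ, preimage_univ]
  have ha' := Measure.sub_add_cancel_of_le h1
  have hb' := Measure.sub_add_cancel_of_le h2
  have hc0 : 1 - v univ ≠ 0 := (tsub_pos_of_lt hlt).ne'
  have hct : 1 - v univ ≠ ⊤ := ne_top_of_le_ne_top ENNReal.one_ne_top tsub_le_self
  generalize phat - v.map Prod.fst = a at *
  generalize p - v.map Prod.snd = b at *
  generalize 1 - v univ = c at *
  have : IsFiniteMeasure a := ⟨by rw [ha]; exact hct.lt_top⟩
  have : IsFiniteMeasure b := ⟨by rw [hb]; exact hct.lt_top⟩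
  obtain ⟨t, ht⟩ : ∃ t : Measure (Xh × X), t = v + c⁻¹ • (a.prod b) := ⟨_, rfl⟩
  have t1 : t.map Prod.fst = phat := by
    rw [ht, Measure.map_add _ _ measurable_fst, Measure.map_smul, Measure.map_fst_prod, hb,
      smul_smul, ENNReal.inv_mul_cancel hc0 hct, one_smul, add_comm, ha']
  have t2 : t.map Prod.snd = p := by
    rw [ht, Measure.map_add _ _ measurable_snd, Measure.map_smul, Measure.map_snd_prod, ha,
      smul_smul, ENNReal.inv_mul_cancel hc0 hct, one_smul, add_comm, hb']
  have tu : t univ = 1 := by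
    rw [← preimage_univ (f := Prod.fst), ← Measure.map_apply measurable_fst MeasurableSet.univ,
      t1, measure_univ]
  have : IsFiniteMeasure t := ⟨by rw [tu]; exact ENNReal.one_lt_top⟩
  let ρ : Measure (X × Xh) := t.map Prod.swap
  have hρ : ρ.fst = p := by
    rw [Measure.fst, Measure.map_map measurable_fst measurable_swap]
    exact t2
  refine ⟨ρ.condKernel, inferInstance, t, fun E hE => ?_, tu, t1, t2, fun E _ => ?_⟩
  · have hE' : MeasurableSet (Prod.swap ⁻¹' E : Set (X × Xh)) := measurable_swap hE
    have := Measure.lintegral_condKernel_mem (ρ := ρ) hE'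
    rw [hρ, Measure.map_apply measurable_swap hE'] at this
    exact this.symm
  · rw [ht, Measure.add_apply]
    exact le_self_add
end

section
/- Let X̃, X̂ and X be standard Borel measurable spaces carrying probability measures p̃, p̂ and p respectively, let Y be a metric space with metric d, and let h̃ : X̃ → Y, ĥ : X̂ → Y, h : X → Y be measurable output maps. Let ε₁, ε₂ ≥ 0 and δ₁, δ₂ ∈ [0,1] with δ₁ + δ₂ ≤ 1. Let R₁ ⊆ X̃ × X̂ and R₂ ⊆ X̂ × X be measurable sets such that d(h̃(x̃), ĥ(x̂)) ≤ ε₁ for all (x̃, x̂) ∈ R₁ and d(ĥ(x̂), h(x)) ≤ ε₂ for all (x̂, x) ∈ R₂, and assume the composed relation R := {(x̃, x) : ∃ x̂ ∈ X̂, (x̃, x̂) ∈ R₁ and (x̂, x) ∈ R₂} is measurable. Suppose v₁ is a sub-probability coupling of p̃ and p̂ over R₁ with respect to δ₁ with v₁(X̃ × X̂) < 1, and v₂ is a sub-probability coupling of p̂ and p over R₂ with respect to δ₂ with v₂(X̂ × X) < 1. Then: (i) d(h̃(x̃), h(x)) ≤ ε₁ + ε₂ for all (x̃, x) ∈ R,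 and (ii) there exists a sub-probability coupling of p̃ and p over R with respect to δ₁ + δ₂. -/
open MeasureTheory Set

open scoped ProbabilityTheory
open ProbabilityTheory (Kernel)

theorem aux_compProd_mono {A B : Type*} [MeasurableSpace A] [MeasurableSpace B]
    {μ ν : Measure A} [SFinite μ] [SFinite ν] (h : μ ≤ ν) (κ : Kernel A B)
    [ProbabilityTheory.IsSFiniteKernel κ] : μ ⊗ₘ κ ≤ ν ⊗ₘ κ := by
  refine Measure.le_iff.2 fun S hS => ?_
  rw [Measure.compProd_apply hS, Measure.compProd_apply hS]
  exact lintegral_mono' h le_rfl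

theorem aux_inf {A : Type*} [MeasurableSpace A] (μ₁ μ₂ ρ : Measure A)
    [IsFiniteMeasure μ₁] [IsFiniteMeasure μ₂] (h₁ : μ₁ ≤ ρ) (h₂ : μ₂ ≤ ρ) :
    ∃ ν : Measure A, ν ≤ μ₁ ∧ ν ≤ μ₂ ∧ μ₁ univ + μ₂ univ ≤ ν univ + ρ univ := by
  obtain ⟨s, hs⟩ := exists_isHahnDecomposition μ₁ μ₂
  have hsm := hs.measurableSet
  refine ⟨μ₁.restrict s + μ₂.restrict sᶜ, ?_, ?_, ?_⟩
  · calc μ₁.restrict s + μ₂.restrict sᶜ ≤ μ₁.restrict s + μ₁.restrict sᶜ :=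
        add_le_add le_rfl hs.ge_on_compl
      _ = μ₁ := Measure.restrict_add_restrict_compl hsm
  · calc μ₁.restrict s + μ₂.restrict sᶜ ≤ μ₂.restrict s + μ₂.restrict sᶜ :=
        add_le_add hs.le_on le_rfl
      _ = μ₂ := Measure.restrict_add_restrict_compl hsm
  · rw [← measure_add_measure_compl (μ := μ₁) hsm, ← measure_add_measure_compl (μ := μ₂) hsm,
      ← measure_add_measure_compl (μ := ρ) hsm]
    simp only [Measure.add_apply, Measure.restrict_apply_univ]
    calc μ₁ s + μ₁ sᶜ + (μ₂ s + μ₂ sᶜ) = μ₁ s + μ₂ sᶜ + (μ₂ s + μ₁ sᶜ) := by ring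
      _ ≤ _ := add_le_add le_rfl (add_le_add (h₂ _) (h₁ _))

/-- A sub-probability coupling of probability measures `ph` on `A` and `p` on `B` over a
measurable relation `R ⊆ A × B` with respect to `δ`: a measure `v` on `A × B` such that
`v(univ) ≥ 1 − δ`, `v(univ) = v(R)`, and whose marginals are dominated by `ph` and `p`. -/
def IsSubProbCoupling {A B : Type*} [MeasurableSpace A] [MeasurableSpace B]
    (ph : Measure A) (p : Measure B) (R : Set (A × B)) (δ : ℝ)
    (v : Measure (A × B)) : Prop :=
  ENNReal.ofReal (1 - δ) ≤ v univ ∧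
  v univ = v R ∧
  (∀ S : Set A, MeasurableSet S → v (S ×ˢ (univ : Set B)) ≤ ph S) ∧
  (∀ S : Set B, MeasurableSet S → v ((univ : Set A) ×ˢ S) ≤ p S)

/-- **Transitivity of (ε,δ)-sub-simulation relations (single-transition level).**
Output closeness composes additively (ε₁ + ε₂) along the composed relation, and the
sub-probability couplings compose into one with deviation δ₁ + δ₂. -/
theorem subsim_transitive {Xt Xh X : Type*}
    [MeasurableSpace Xt] [StandardBorelSpace Xt]
    [MeasurableSpace Xh] [StandardBorelSpace Xh]
    [MeasurableSpace X] [StandardBorelSpace X]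
    (pt : Measure Xt) (ph : Measure Xh) (p : Measure X)
    [IsProbabilityMeasure pt] [IsProbabilityMeasure ph] [IsProbabilityMeasure p]
    {Y : Type*} [MetricSpace Y] [MeasurableSpace Y]
    (ht : Xt → Y) (hh : Xh → Y) (h : X → Y)
    (hht : Measurable ht) (hhh : Measurable hh) (hhm : Measurable h)
    (ε₁ ε₂ : ℝ) (hε₁ : 0 ≤ ε₁) (hε₂ : 0 ≤ ε₂)
    (δ₁ δ₂ : ℝ) (hδ₁ : 0 ≤ δ₁) (hδ₁' : δ₁ ≤ 1) (hδ₂ : 0 ≤ δ₂) (hδ₂' : δ₂ ≤ 1)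
    (hδsum : δ₁ + δ₂ ≤ 1)
    (R₁ : Set (Xt × Xh)) (hR₁ : MeasurableSet R₁)
    (R₂ : Set (Xh × X)) (hR₂ : MeasurableSet R₂)
    (hout₁ : ∀ q ∈ R₁, dist (ht q.1) (hh q.2) ≤ ε₁)
    (hout₂ : ∀ q ∈ R₂, dist (hh q.1) (h q.2) ≤ ε₂)
    (hRmeas : MeasurableSet {q : Xt × X | ∃ xh : Xh, (q.1, xh) ∈ R₁ ∧ (xh, q.2) ∈ R₂})
    (v₁ : Measure (Xt × Xh)) (hv₁ : IsSubProbCoupling pt ph R₁ δ₁ v₁)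
    (hv₁lt : v₁ univ < 1)
    (v₂ : Measure (Xh × X)) (hv₂ : IsSubProbCoupling ph p R₂ δ₂ v₂)
    (hv₂lt : v₂ univ < 1) :
    (∀ q ∈ {q : Xt × X | ∃ xh : Xh, (q.1, xh) ∈ R₁ ∧ (xh, q.2) ∈ R₂},
        dist (ht q.1) (h q.2) ≤ ε₁ + ε₂) ∧
    (∃ v : Measure (Xt × X),
        IsSubProbCoupling pt p
          {q : Xt × X | ∃ xh : Xh, (q.1, xh) ∈ R₁ ∧ (xh, q.2) ∈ R₂} (δ₁ + δ₂) v) := by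
  classical
  refine ⟨?_, ?_⟩
  · rintro ⟨a, c⟩ ⟨b, h1, h2⟩
    have e1 := hout₁ _ h1
    have e2 := hout₂ _ h2
    have := dist_triangle (ht a) (hh b) (h c)
    simp only at e1 e2 ⊢
    linarith
  obtain ⟨ha1, hb1, hc1, hd1⟩ := hv₁
  obtain ⟨ha2, hb2, hc2, hd2⟩ := hv₂
  have : IsFiniteMeasure v₁ := ⟨hv₁lt.trans ENNReal.one_lt_top⟩
  have : IsFiniteMeasure v₂ := ⟨hv₂lt.trans ENNReal.one_lt_top⟩
  have : Nonempty Xt := nonempty_of_isProbabilityMeasure pt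
  have : Nonempty X := nonempty_of_isProbabilityMeasure p
  set w : Measure (Xh × Xt) := v₁.map Prod.swap with hw
  have hwfin : IsFiniteMeasure w := by rw [hw]; infer_instance
  have hw1 : w.fst ⊗ₘ w.condKernel = w := w.disintegrate w.condKernel
  have hw2 : v₂.fst ⊗ₘ v₂.condKernel = v₂ := v₂.disintegrate v₂.condKernel
  have hm1 : w.fst ≤ ph := by
    refine Measure.le_iff.2 fun S hS => ?_
    rw [Measure.fst_apply hS, hw, Measure.map_apply measurable_swap (measurable_fst hS)]
    refine le_trans (le_of_eq ?_) (hd1 S hS)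
    congr 1
    ext x
    simp
  have hm2 : v₂.fst ≤ ph := by
    refine Measure.le_iff.2 fun S hS => ?_
    rw [Measure.fst_apply hS]
    refine le_trans (le_of_eq ?_) (hc2 S hS)
    congr 1
    ext x
    simp
  obtain ⟨ν, hν1, hν2, hνm⟩ := aux_inf w.fst v₂.fst ph hm1 hm2
  have hνfin : IsFiniteMeasure ν := isFiniteMeasure_of_le _ hν1
  set π : Measure (Xh × (Xt × X)) := ν ⊗ₘ (w.condKernel ×ₖ v₂.condKernel) with hπ
  have hπ1 : π.map (fun q => (q.1, q.2.1)) ≤ w := by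
    have : π.map (fun q => (q.1, q.2.1)) = ν ⊗ₘ w.condKernel := by
      have := Measure.compProd_map (μ := ν) (κ := w.condKernel ×ₖ v₂.condKernel)
        (f := Prod.fst) measurable_fst
      rw [← Kernel.fst_eq, Kernel.fst_prod] at this
      rw [this]
      rfl
    rw [this]
    conv_rhs => rw [← hw1]
    exact aux_compProd_mono hν1 _
  have hπ2 : π.map (fun q => (q.1, q.2.2)) ≤ v₂ := by
    have : π.map (fun q => (q.1, q.2.2)) = ν ⊗ₘ v₂.condKernel := by
      have := Measure.compProd_map (μ := ν) (κ := w.condKernel ×ₖ v₂.condKernel)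
        (f := Prod.snd) measurable_snd
      rw [← Kernel.snd_eq, Kernel.snd_prod] at this
      rw [this]
      rfl
    rw [this]
    conv_rhs => rw [← hw2]
    exact aux_compProd_mono hν2 _
  have f1 : Measurable (fun q : Xh × (Xt × X) => (q.1, q.2.1)) := by fun_prop
  have f2 : Measurable (fun q : Xh × (Xt × X) => (q.1, q.2.2)) := by fun_prop
  refine ⟨π.snd, ?_, ?_, ?_, ?_⟩
  · have hu : π.snd univ = ν univ := by
      rw [Measure.snd_univ, hπ, Measure.compProd_apply_univ]
    rw [hu]
    rw [Measure.fst_univ, Measure.fst_univ, hw,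
      Measure.map_apply measurable_swap MeasurableSet.univ, preimage_univ, measure_univ (μ := ph)] at hνm
    have e3 : ENNReal.ofReal (1 - (δ₁ + δ₂)) + 1 ≤ ν univ + 1 := by
      calc ENNReal.ofReal (1 - (δ₁ + δ₂)) + 1
          = ENNReal.ofReal (1 - δ₁) + ENNReal.ofReal (1 - δ₂) := by
            rw [← ENNReal.ofReal_one, ← ENNReal.ofReal_add (by linarith) (by norm_num),
              ← ENNReal.ofReal_add (by linarith) (by linarith)]
            congr 1
            ring
        _ ≤ v₁ univ + v₂ univ := add_le_add ha1 ha2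
        _ ≤ ν univ + 1 := hνm
    exact (ENNReal.add_le_add_iff_right ENNReal.one_ne_top).1 e3
  · have z1 : v₁ R₁ᶜ = 0 := by
      rw [measure_compl hR₁ (measure_ne_top _ _), hb1, tsub_self]
    have z2 : v₂ R₂ᶜ = 0 := by
      rw [measure_compl hR₂ (measure_ne_top _ _), hb2, tsub_self]
    have y1 : π ((fun q => (q.1, q.2.1)) ⁻¹' (Prod.swap ⁻¹' R₁ᶜ)) = 0 := by
      rw [← Measure.map_apply f1 (measurable_swap hR₁.compl)]
      refine le_antisymm ((hπ1 _).trans ?_) zero_le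
      rw [hw, Measure.map_apply measurable_swap (measurable_swap hR₁.compl)]
      exact z1.le
    have y2 : π ((fun q => (q.1, q.2.2)) ⁻¹' R₂ᶜ) = 0 := by
      rw [← Measure.map_apply f2 hR₂.compl]
      exact le_antisymm ((hπ2 _).trans z2.le) zero_le
    symm
    refine measure_congr (Filter.eventuallyEq_univ.2 ?_)
    rw [mem_ae_iff, Measure.snd_apply hRmeas.compl]
    refine measure_mono_null ?_ (measure_union_null y1 y2)
    rintro ⟨b, a, c⟩ hq
    by_contra hcon
    simp only [mem_union, mem_preimage, mem_compl_iff, Prod.swap_prod_mk, not_or, not_not] at hcon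
    exact hq ⟨b, hcon.1, hcon.2⟩
  · intro S hS
    rw [Measure.snd_apply (hS.prod MeasurableSet.univ)]
    have := hπ1 (Prod.snd ⁻¹' S)
    rw [Measure.map_apply f1 (measurable_snd hS), hw,
      Measure.map_apply measurable_swap (measurable_snd hS)] at this
    refine le_trans (le_of_eq ?_) (this.trans (le_trans (le_of_eq ?_) (hc1 S hS)))
    · congr 1
      ext x
      simp
    · congr 1
      ext x
      simp
  · intro S hS
    rw [Measure.snd_apply (MeasurableSet.univ.prod hS)]
    have := hπ2 (Prod.snd ⁻¹' S)
    rw [Measure.map_apply f2 (measurable_snd hS)] at this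
    refine le_trans (le_of_eq ?_) (this.trans (le_trans (le_of_eq ?_) (hd2 S hS)))
    · congr 1
      ext x
      simp
    · congr 1
      ext x
      simp
end

section
/- Let n ≥ 1, let Σ ∈ ℝ^{n×n} be symmetric positive definite and γ ∈ ℝⁿ. Then ∫_{ℝⁿ} min(g_{0,Σ}(w), g_{−γ,Σ}(w)) dw = 2 · Φ(−½ √(γᵀ Σ⁻¹ γ)), where the integral is with respect to Lebesgue measure on ℝⁿ. -/
open Matrix MeasureTheory

/-- Density of the multivariate normal distribution `N(μ, S)` (for `S` symmetric positive
definite) with respect to Lebesgue measure on `ℝⁿ`. -/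
noncomputable def gaussDensity {ι : Type*} [Fintype ι] [DecidableEq ι] (μ : ι → ℝ)
    (S : Matrix ι ι ℝ) (w : ι → ℝ) : ℝ :=
  (2 * Real.pi) ^ (-(Fintype.card ι : ℝ) / 2) * S.det ^ (-(1 : ℝ) / 2) *
    Real.exp (-(1 / 2) * ((w - μ) ⬝ᵥ (S⁻¹ *ᵥ (w - μ))))

/-- The standard normal cumulative distribution function
`Φ(ζ) = ∫_{−∞}^{ζ} (2π)^{−1/2} e^{−β²/2} dβ`. -/
noncomputable def stdNormalCdf (ζ : ℝ) : ℝ :=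
  ∫ β in Set.Iic ζ, (2 * Real.pi) ^ (-(1 : ℝ) / 2) * Real.exp (-β ^ 2 / 2)


noncomputable def phi1 (x : ℝ) : ℝ := (2 * Real.pi) ^ (-(1 : ℝ) / 2) * Real.exp (-x ^ 2 / 2)

lemma phi1_eq : phi1 = ProbabilityTheory.gaussianPDFReal 0 1 := by
  funext x
  have : (2 * Real.pi) ^ (-(1 : ℝ) / 2) = (√(2 * Real.pi))⁻¹ := by
    rw [Real.sqrt_eq_rpow, ← Real.rpow_neg (by positivity)]; norm_num
  simp [phi1, ProbabilityTheory.gaussianPDFReal, this]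

lemma phi1_int : Integrable phi1 := by
  rw [phi1_eq]; exact ProbabilityTheory.integrable_gaussianPDFReal 0 1

lemma phi1_one : ∫ x, phi1 x = 1 := by
  rw [phi1_eq]; exact ProbabilityTheory.integral_gaussianPDFReal_eq_one 0 (by norm_num)

lemma phi1_neg (x : ℝ) : phi1 (-x) = phi1 x := by simp [phi1]

lemma phi1_le {x y : ℝ} (h : y ^ 2 ≤ x ^ 2) : phi1 x ≤ phi1 y := by
  unfold phi1
  gcongr

lemma oneD (r : ℝ) (hr : 0 ≤ r) :
    ∫ x, min (phi1 x) (phi1 (x + r)) = 2 * stdNormalCdf (-(1 / 2) * r) := by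
  have hi2 : Integrable (fun x => phi1 (x + r)) := phi1_int.comp_add_right r
  have hi : Integrable (fun x => min (phi1 x) (phi1 (x + r))) := phi1_int.inf hi2
  rw [← integral_add_compl (s := Set.Iic (-(1/2) * r)) measurableSet_Iic hi, Set.compl_Iic]
  have h1 : ∫ x in Set.Iic (-(1/2) * r), min (phi1 x) (phi1 (x + r)) =
      stdNormalCdf (-(1 / 2) * r) := by
    unfold stdNormalCdf
    refine setIntegral_congr_fun measurableSet_Iic fun x hx => ?_
    have hx' : x ≤ -(1/2) * r := hx
    exact min_eq_left (phi1_le (by nlinarith))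
  have h2 : ∫ x in Set.Ioi (-(1/2) * r), min (phi1 x) (phi1 (x + r)) =
      stdNormalCdf (-(1 / 2) * r) := by
    have e1 : ∫ x in Set.Ioi (-(1/2) * r), min (phi1 x) (phi1 (x + r)) =
        ∫ x in Set.Ioi (-(1/2) * r), phi1 (x + r) := by
      refine setIntegral_congr_fun measurableSet_Ioi fun x hx => ?_
      have hx' : -(1/2) * r < x := hx
      exact min_eq_right (phi1_le (by nlinarith))
    have e2 : ∫ x in Set.Ioi (-(1/2) * r), phi1 (x + r) = ∫ x in Set.Ioi ((1/2) * r), phi1 x := by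
      have := (measurePreserving_add_right (volume : Measure ℝ) r).setIntegral_preimage_emb
        (measurableEmbedding_addRight r) phi1 (Set.Ioi ((1/2) * r))
      rw [← this]
      congr 2
      ext x; simp; constructor <;> intro h <;> linarith
    rw [e1, e2]
    have := integral_comp_neg_Iic (-(1/2) * r) phi1
    simp only [phi1_neg] at this
    rw [show (1/2) * r = -(-(1/2) * r) by ring, ← this]
    rfl
  rw [h1, h2]; ring

lemma prodPhi {n : ℕ} (x : Fin n → ℝ) :
    ∏ i, phi1 (x i) = (2 * Real.pi) ^ (-(n : ℝ) / 2) * Real.exp (-(1 / 2) * (x ⬝ᵥ x)) := by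
  unfold phi1
  rw [Finset.prod_mul_distrib, Finset.prod_const, ← Real.exp_sum, Finset.card_univ,
    Fintype.card_fin, ← Real.rpow_natCast, ← Real.rpow_mul (by positivity)]
  congr 2
  · ring
  · rw [dotProduct, Finset.mul_sum]
    exact Finset.sum_congr rfl fun i _ => by ring

/-- integrand in whitened coordinates -/
noncomputable def G {n : ℕ} (v x : Fin n → ℝ) : ℝ :=
  min (∏ i, phi1 (x i)) (∏ i, phi1 ((x + v) i))

lemma G_cont {n : ℕ} (v : Fin n → ℝ) : Continuous (G v) := by
  unfold G phi1
  simp only [Pi.add_apply]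
  fun_prop

lemma G_axis {m : ℕ} (r : ℝ) (hr : 0 ≤ r) :
    ∫ x : Fin (m+1) → ℝ, G (Pi.single 0 r) x = 2 * stdNormalCdf (-(1 / 2) * r) := by
  have h : ∀ x : Fin (m+1) → ℝ, G (Pi.single 0 r) x =
      ∏ i, (Fin.cons (fun t => min (phi1 t) (phi1 (t + r))) (fun _ => phi1) :
        Fin (m+1) → ℝ → ℝ) i (x i) := by
    intro x
    have hp : 0 ≤ ∏ i : Fin m, phi1 (x i.succ) :=
      Finset.prod_nonneg fun i _ => by unfold phi1; positivity
    simp [G, Fin.prod_univ_succ, min_mul_of_nonneg _ _ hp]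
  simp_rw [h]
  rw [integral_fintype_prod_volume_eq_prod, Fin.prod_univ_succ]
  simp [phi1_one, oneD r hr]

lemma G_isom {m : ℕ} (v : Fin (m+1) → ℝ) :
    ∫ x, G v x = ∫ x : Fin (m+1) → ℝ, G (Pi.single 0 (√(v ⬝ᵥ v))) x := by
  have key : ∀ u : Fin (m+1) → ℝ, ∫ x, G u x = ∫ x : EuclideanSpace ℝ (Fin (m+1)),
      G u (WithLp.ofLp x) := fun u =>
    ((PiLp.volume_preserving_ofLp (Fin (m+1))).integral_comp
      (MeasurableEquiv.toLp 2 _).symm.measurableEmbedding (G u)).symm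
  set E := EuclideanSpace ℝ (Fin (m+1))
  set u : Fin (m+1) → ℝ := Pi.single 0 (√(v ⬝ᵥ v))
  have hd : ∀ x : E, WithLp.ofLp x ⬝ᵥ WithLp.ofLp x = ‖x‖ ^ 2 := by
    intro x
    rw [EuclideanSpace.real_norm_sq_eq, dotProduct]
    exact Finset.sum_congr rfl fun i _ => by ring
  have hG : ∀ (u : Fin (m+1) → ℝ) (x : E), G u (WithLp.ofLp x) =
      min ((2 * Real.pi) ^ (-((m+1 : ℕ) : ℝ) / 2) * Real.exp (-(1 / 2) * ‖x‖ ^ 2))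
        ((2 * Real.pi) ^ (-((m+1 : ℕ) : ℝ) / 2) *
          Real.exp (-(1 / 2) * ‖x + WithLp.toLp 2 u‖ ^ 2)) := by
    intro u x
    rw [G, prodPhi, prodPhi, ← hd, ← hd]
    rfl
  have hv0 : 0 ≤ v ⬝ᵥ v := by
    have := hd (WithLp.toLp 2 v)
    simp only at this
    rw [this]; positivity
  have hn : ‖(WithLp.toLp 2 u : E)‖ = ‖(WithLp.toLp 2 v : E)‖ := by
    have h2 : ‖(WithLp.toLp 2 u : E)‖ ^ 2 = ‖(WithLp.toLp 2 v : E)‖ ^ 2 := by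
      rw [← hd, ← hd]
      simp [u, Real.mul_self_sqrt hv0]
    exact (sq_eq_sq₀ (norm_nonneg _) (norm_nonneg _)).1 h2
  have hR := Submodule.reflection_sub hn
  set R : E ≃ₗᵢ[ℝ] E := Submodule.reflection (ℝ ∙ ((WithLp.toLp 2 u : E) - WithLp.toLp 2 v))ᗮ
  rw [key, key, ← R.measurePreserving.integral_comp R.toHomeomorph.measurableEmbedding]
  congr 1
  funext x
  rw [hG, hG, ← hR, ← map_add, R.norm_map, R.norm_map]

open scoped MatrixOrder in
lemma psd_factor {n : ℕ} {A : Matrix (Fin n) (Fin n) ℝ} (hA : A.PosSemidef) :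
    ∃ D : Matrix (Fin n) (Fin n) ℝ, A = Dᴴ * D :=
  CStarAlgebra.nonneg_iff_eq_star_mul_self.mp hA.nonneg

theorem gauss_min_integral_eq_cdf {n : ℕ} (hn : 1 ≤ n)
    (S : Matrix (Fin n) (Fin n) ℝ) (hS : S.PosDef) (γ : Fin n → ℝ) :
    ∫ w : Fin n → ℝ, min (gaussDensity 0 S w) (gaussDensity (-γ) S w) =
      2 * stdNormalCdf (-(1 / 2) * Real.sqrt (γ ⬝ᵥ (S⁻¹ *ᵥ γ))) := by
  obtain ⟨m, rfl⟩ : ∃ m, n = m + 1 := ⟨n - 1, by omega⟩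
  obtain ⟨D, hD⟩ := psd_factor hS.inv.posSemidef
  have hq : ∀ w, w ⬝ᵥ (S⁻¹ *ᵥ w) = (D *ᵥ w) ⬝ᵥ (D *ᵥ w) := by
    intro w
    rw [hD, conjTranspose_eq_transpose_of_trivial, ← mulVec_mulVec, dotProduct_mulVec,
      vecMul_transpose]
  have hdet : S.det⁻¹ = D.det ^ 2 := by
    have := congrArg Matrix.det hD
    rw [det_nonsing_inv, conjTranspose_eq_transpose_of_trivial, det_mul, det_transpose,
      Ring.inverse_eq_inv'] at this
    rw [this]; ring
  have hSd := hS.det_pos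
  have hD0 : D.det ≠ 0 := by
    intro h
    rw [h] at hdet
    have := inv_pos.2 hSd
    simp_all
  have hc : S.det ^ (-(1 : ℝ) / 2) = |D.det| := by
    rw [← Real.sqrt_sq_eq_abs, ← hdet, Real.sqrt_eq_rpow, Real.inv_rpow hSd.le,
      ← Real.rpow_neg hSd.le]
    norm_num
  have hF : ∀ w, min (gaussDensity 0 S w) (gaussDensity (-γ) S w) =
      |D.det| * G (D *ᵥ γ) (Matrix.toLin' D w) := by
    intro w
    rw [G, prodPhi, prodPhi, mul_min_of_nonneg _ _ (abs_nonneg _), gaussDensity, gaussDensity,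
      hq, hq, hc, toLin'_apply, ← mulVec_add]
    simp only [sub_zero, sub_neg_eq_add, Fintype.card_fin]
    congr 1 <;> ring
  simp_rw [hF]
  have hdl : LinearMap.det (Matrix.toLin' D) ≠ 0 := by rwa [LinearMap.det_toLin']
  have hm := Measure.map_linearMap_addHaar_eq_smul_addHaar
    (volume : Measure (Fin (m+1) → ℝ)) hdl
  have hcont : Continuous (Matrix.toLin' D) := LinearMap.continuous_of_finiteDimensional _
  rw [integral_const_mul, ← integral_map (φ := Matrix.toLin' D) (f := G (D *ᵥ γ))
    hcont.aemeasurable (G_cont _).aestronglyMeasurable, hm, integral_smul_measure,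
    ENNReal.toReal_ofReal (abs_nonneg _), LinearMap.det_toLin', G_isom, G_axis _ (Real.sqrt_nonneg _),
    hq, abs_inv, smul_eq_mul, mul_inv_cancel_left₀ (abs_ne_zero.2 hD0)]
end

section
/- Let n ≥ 1, let Σ ∈ ℝ^{n×n} be symmetric positive definite, let μ̂, μ ∈ ℝⁿ and set γ := μ − μ̂. Let ρ be the measure on ℝⁿ with density w ↦ min(g_{0,Σ}(w), g_{−γ,Σ}(w)) with respect to Lebesgue measure, and let v be the pushforward of ρ under the map w ↦ (μ + w, μ + w), a measure on ℝⁿ × ℝⁿ. Then v is a sub-probability coupling of N(μ̂, Σ) and N(μ, Σ) over the diagonal R := {(a, b) ∈ ℝⁿ × ℝⁿ : a = b} with respect to δ := 1 − 2Φ(−½√(γᵀΣ⁻¹γ)); that is: v(ℝⁿ × ℝⁿ) = v(R) = 2Φ(−½√(γᵀΣ⁻¹γ)) = 1 − δ, v(A × ℝⁿ) ≤ N(μ̂,Σ)(A) for every measurable A ⊆ ℝⁿ, and v(ℝⁿ × A) ≤ N(μ,Σ)(A) for every measurable A ⊆ ℝⁿ. -/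
open Matrix MeasureTheory Set

/-- The Gaussian probability measure `N(μ, S)` on `ℝⁿ`. -/
noncomputable def gaussMeasure {ι : Type*} [Fintype ι] [DecidableEq ι] (μ : ι → ℝ)
    (S : Matrix ι ι ℝ) : Measure (ι → ℝ) :=
  volume.withDensity fun w => ENNReal.ofReal (gaussDensity μ S w)

open ProbabilityTheory in
lemma cdf_eq (z : ℝ) : gaussianReal 0 1 (Set.Iic z) = ENNReal.ofReal (stdNormalCdf z) := by
  rw [gaussianReal_apply_eq_integral 0 one_ne_zero, stdNormalCdf]
  congr 1
  refine integral_congr_ae (Filter.Eventually.of_forall fun x => ?_)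
  simp only [gaussianPDFReal_def, NNReal.coe_one, mul_one, sub_zero]
  rw [Real.sqrt_eq_rpow, ← Real.rpow_neg (by positivity)]
  norm_num

lemma cdf_nonneg (z : ℝ) : 0 ≤ stdNormalCdf z := by
  unfold stdNormalCdf
  exact integral_nonneg fun x => by positivity

open ProbabilityTheory in
lemma pdf_eq (m x : ℝ) : gaussianPDFReal m 1 x
    = (Real.sqrt (2 * Real.pi))⁻¹ * Real.exp (-(x - m)^2 / 2) := by
  simp [gaussianPDFReal_def]

open ProbabilityTheory in
lemma one_dim (r : ℝ) (hr : 0 ≤ r) :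
    ∫⁻ x, ENNReal.ofReal (min 1 (Real.exp (-(r * x) - r * r / 2))) ∂(gaussianReal 0 1)
      = ENNReal.ofReal (2 * stdNormalCdf (-(1/2) * r)) := by
  rw [gaussianReal_of_var_ne_zero 0 one_ne_zero,
    lintegral_withDensity_eq_lintegral_mul _ (measurable_gaussianPDF _ _) (by fun_prop)]
  rw [← lintegral_add_compl _ (measurableSet_Iic (a := -(1/2) * r))]
  have h1 : ∫⁻ x in Iic (-(1/2) * r), (gaussianPDF 0 1 * fun x =>
      ENNReal.ofReal (min 1 (Real.exp (-(r * x) - r * r / 2)))) x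
      = gaussianReal 0 1 (Set.Iic (-(1/2) * r)) := by
    rw [gaussianReal_apply 0 one_ne_zero]
    refine setLIntegral_congr_fun measurableSet_Iic fun x hx => ?_
    have hx' : x ≤ -(1/2) * r := hx
    have : 1 ≤ Real.exp (-(r * x) - r * r / 2) := by
      rw [Real.one_le_exp_iff]; nlinarith
    simp only [Pi.mul_apply, min_eq_left this, ENNReal.ofReal_one, mul_one]
  have h2 : ∫⁻ x in (Iic (-(1/2) * r))ᶜ, (gaussianPDF 0 1 * fun x =>
      ENNReal.ofReal (min 1 (Real.exp (-(r * x) - r * r / 2)))) x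
      = gaussianReal (-r) 1 (Set.Ioi (-(1/2) * r)) := by
    rw [gaussianReal_apply (-r) one_ne_zero, compl_Iic]
    refine setLIntegral_congr_fun measurableSet_Ioi fun x hx => ?_
    have hx' : -(1/2) * r < x := hx
    have : Real.exp (-(r * x) - r * r / 2) ≤ 1 := by
      rw [Real.exp_le_one_iff]; nlinarith
    simp only [Pi.mul_apply, min_eq_right this, gaussianPDF]
    rw [← ENNReal.ofReal_mul (gaussianPDFReal_nonneg _ _ _), pdf_eq, pdf_eq, mul_assoc,
      ← Real.exp_add]
    congr 3
    ring
  rw [h1, h2]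
  have h3 : gaussianReal (-r) 1 (Set.Ioi (-(1/2) * r)) = gaussianReal 0 1 (Set.Iic (-(1/2) * r)) := by
    have := gaussianReal_map_const_sub (μ := 0) (v := 1) (-r)
    rw [sub_zero] at this
    rw [← this, Measure.map_apply (by fun_prop) measurableSet_Ioi]
    have := nullSingletonClass_gaussianReal (μ := 0) (v := 1) one_ne_zero
    rw [← measure_congr (Iio_ae_eq_Iic)]
    congr 1
    ext x
    simp only [mem_preimage, mem_Ioi, mem_Iio]
    constructor <;> intro h <;> linarith
  rw [h3, cdf_eq, two_mul, ENNReal.ofReal_add (cdf_nonneg _) (cdf_nonneg _)]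

open ProbabilityTheory in
lemma pi_density (n : ℕ) : Measure.pi (fun _ : Fin n => gaussianReal 0 1)
    = volume.withDensity fun z => ENNReal.ofReal (∏ i, gaussianPDFReal 0 1 (z i)) := by
  refine Measure.pi_eq fun s hs => ?_
  rw [withDensity_apply _ (MeasurableSet.univ_pi hs), volume_pi, Measure.restrict_pi_pi,
    ← ofReal_integral_eq_lintegral_ofReal, integral_fintype_prod_eq_prod
      (fun _ => gaussianPDFReal 0 1), ENNReal.ofReal_prod_of_nonneg]
  · refine Finset.prod_congr rfl fun i _ => ?_
    rw [gaussianReal_apply_eq_integral 0 one_ne_zero]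
  · exact fun i _ => integral_nonneg fun x => gaussianPDFReal_nonneg _ _ _
  · exact Integrable.fintype_prod (f := fun _ => gaussianPDFReal 0 1)
      fun i => (integrable_gaussianPDFReal 0 1).restrict
  · exact Filter.Eventually.of_forall fun x =>
      Finset.prod_nonneg fun i _ => gaussianPDFReal_nonneg _ _ _

open ProbabilityTheory in
lemma law_dot {n : ℕ} (a : Fin n → ℝ) : (Measure.pi (fun _ : Fin n => gaussianReal 0 1)).map
    (fun z => a ⬝ᵥ z) = (gaussianReal 0 1).map (fun x => Real.sqrt (a ⬝ᵥ a) * x) := by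
  have h : (fun z : Fin n → ℝ => a ⬝ᵥ z) =
      (innerSL ℝ (WithLp.toLp 2 a)) ∘ (WithLp.toLp 2) := by
    ext z
    simp [PiLp.inner_apply, dotProduct, mul_comm]
  rw [h, ← Measure.map_map (by fun_prop) (by fun_prop), map_pi_eq_stdGaussian,
    IsGaussian.map_eq_gaussianReal, gaussianReal_map_const_mul,
    integral_strongDual_stdGaussian, variance_dual_stdGaussian]
  have ha : 0 ≤ a ⬝ᵥ a := by
    simp only [dotProduct]; exact Finset.sum_nonneg fun i _ => mul_self_nonneg _
  congr 1
  · simp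
  · ext
    have h1 : ‖innerSL ℝ (WithLp.toLp 2 a : EuclideanSpace ℝ (Fin n))‖ ^ 2 = a ⬝ᵥ a := by
      rw [innerSL_apply_norm, EuclideanSpace.real_norm_sq_eq]
      simp [dotProduct, sq]
    rw [h1, Real.coe_toNNReal _ ha]
    simp [Real.sq_sqrt ha]

lemma exists_factor {n : ℕ} (S : Matrix (Fin n) (Fin n) ℝ) (hS : S.PosDef) :
    ∃ M : Matrix (Fin n) (Fin n) ℝ, M.det ≠ 0 ∧ Mᵀ * S⁻¹ * M = 1 ∧
      |M.det| * S.det ^ (-(1 : ℝ) / 2) = 1 := by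
  open scoped MatrixOrder in
  obtain ⟨B, rfl⟩ := CStarAlgebra.nonneg_iff_eq_star_mul_self.mp hS.posSemidef.nonneg
  have hd := hS.det_pos
  rw [star_eq_conjTranspose, conjTranspose_eq_transpose_of_trivial] at *
  rw [det_mul, det_transpose] at hd
  have hB : B.det ≠ 0 := fun h => by simp [h] at hd
  have hu : IsUnit B.det := isUnit_iff_ne_zero.2 hB
  have hu' : IsUnit Bᵀ.det := by rwa [det_transpose]
  refine ⟨Bᵀ, by rwa [det_transpose], ?_, ?_⟩
  · rw [transpose_transpose, Matrix.mul_inv_rev, ← Matrix.mul_assoc, mul_nonsing_inv _ hu, Matrix.one_mul,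
      nonsing_inv_mul _ hu']
  · rw [det_mul, det_transpose, ← abs_mul_abs_self B.det, neg_div, Real.rpow_neg (by positivity),
      ← Real.sqrt_eq_rpow, Real.sqrt_mul_self (abs_nonneg _)]
    exact mul_inv_cancel₀ (abs_ne_zero.2 hB)

lemma quad {n : ℕ} {S M : Matrix (Fin n) (Fin n) ℝ} (h : Mᵀ * S⁻¹ * M = 1) (z : Fin n → ℝ) :
    (M *ᵥ z) ⬝ᵥ (S⁻¹ *ᵥ (M *ᵥ z)) = z ⬝ᵥ z := by
  rw [dotProduct_comm, dotProduct_mulVec, dotProduct_comm, ← mulVec_transpose, mulVec_mulVec,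
    mulVec_mulVec, h, one_mulVec]

lemma const_eq (n : ℕ) : (2 * Real.pi) ^ (-(Fintype.card (Fin n) : ℝ) / 2)
    = ((Real.sqrt (2 * Real.pi))⁻¹) ^ n := by
  rw [Real.sqrt_eq_rpow, ← Real.rpow_neg (by positivity), ← Real.rpow_natCast, ← Real.rpow_mul
    (by positivity), Fintype.card_fin]
  congr 1
  ring

open ProbabilityTheory in
lemma prod_pdf {n : ℕ} (z : Fin n → ℝ) : ∏ i, gaussianPDFReal 0 1 (z i)
    = ((Real.sqrt (2 * Real.pi))⁻¹) ^ n * Real.exp (-(1/2) * (z ⬝ᵥ z)) := by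
  simp only [pdf_eq, Finset.prod_mul_distrib, ← Real.exp_sum]
  simp only [Finset.prod_const, Finset.card_univ, Fintype.card_fin, dotProduct, Finset.mul_sum]
  congr 2
  refine Finset.sum_congr rfl fun i _ => ?_
  ring

lemma gaussDensity_meas {n : ℕ} (m : Fin n → ℝ) (S : Matrix (Fin n) (Fin n) ℝ) :
    Measurable (gaussDensity m S) := by
  unfold gaussDensity
  have : Continuous fun w : Fin n → ℝ => (w - m) ⬝ᵥ (S⁻¹ *ᵥ (w - m)) := by
    fun_prop
  exact (by fun_prop : Continuous _).measurable

lemma total {n : ℕ} (S : Matrix (Fin n) (Fin n) ℝ) (hS : S.PosDef) (γ : Fin n → ℝ) :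
    ∫⁻ w, ENNReal.ofReal (min (gaussDensity 0 S w) (gaussDensity (-γ) S w))
      = ENNReal.ofReal (2 * stdNormalCdf (-(1 / 2) * Real.sqrt (γ ⬝ᵥ (S⁻¹ *ᵥ γ)))) := by
  obtain ⟨M, hM, hq, hdet⟩ := exists_factor S hS
  obtain ⟨a, rfl⟩ : ∃ a, γ = M *ᵥ a := ⟨M⁻¹ *ᵥ γ, by
    rw [mulVec_mulVec, mul_nonsing_inv _ (isUnit_iff_ne_zero.2 hM), one_mulVec]⟩
  have ha : 0 ≤ a ⬝ᵥ a := by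
    simp only [dotProduct]; exact Finset.sum_nonneg fun i _ => mul_self_nonneg _
  rw [quad hq, ← one_dim _ (Real.sqrt_nonneg _)]
  have hvol : (volume : Measure (Fin n → ℝ))
      = ENNReal.ofReal |M.det| • Measure.map (toLin' M) volume := by
    rw [Real.map_matrix_volume_pi_eq_smul_volume_pi hM, smul_smul,
      ← ENNReal.ofReal_mul (abs_nonneg _), ← abs_mul, mul_inv_cancel₀ hM]
    simp
  have hmeas : Measurable fun w => ENNReal.ofReal
      (min (gaussDensity 0 S w) (gaussDensity (-(M *ᵥ a)) S w)) :=
    ((gaussDensity_meas _ _).min (gaussDensity_meas _ _)).ennreal_ofReal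
  have hcont : Continuous (toLin' M) := LinearMap.continuous_of_finiteDimensional _
  have hdm : Measurable fun z : Fin n → ℝ => a ⬝ᵥ z :=
    (by fun_prop : Continuous fun z : Fin n → ℝ => a ⬝ᵥ z).measurable
  rw [hvol, lintegral_smul_measure, lintegral_map hmeas hcont.measurable, smul_eq_mul,
    ← lintegral_const_mul _ (by exact hmeas.comp hcont.measurable)]
  have key := lintegral_map (μ := ProbabilityTheory.gaussianReal 0 1)
    (f := fun y => ENNReal.ofReal (min 1 (Real.exp (-y - a ⬝ᵥ a / 2))))
    (g := fun x => Real.sqrt (a ⬝ᵥ a) * x) (by fun_prop) (by fun_prop)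
  rw [Real.mul_self_sqrt ha, ← key, ← law_dot, lintegral_map (by fun_prop) hdm, pi_density,
    lintegral_withDensity_eq_lintegral_mul]
  · refine lintegral_congr fun z => ?_
    rw [Pi.mul_apply, ← ENNReal.ofReal_mul (abs_nonneg _), ← ENNReal.ofReal_mul, toLin'_apply]
    · congr 1
      rw [prod_pdf, mul_min_of_nonneg _ _ (abs_nonneg _), mul_min_of_nonneg _ _ (by positivity),
        mul_one, mul_assoc _ (Real.exp _) (Real.exp _), ← Real.exp_add]
      simp only [gaussDensity, const_eq, sub_zero, sub_neg_eq_add, ← mulVec_add, quad hq]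
      have e : ∀ c t : ℝ, |M.det| * (c * S.det ^ (-(1 : ℝ) / 2) * t) = c * t := by
        intro c t
        calc _ = (|M.det| * S.det ^ (-(1 : ℝ) / 2)) * (c * t) := by ring
          _ = _ := by rw [hdet, one_mul]
      rw [e, e]
      congr 3
      rw [add_dotProduct, dotProduct_add, dotProduct_add, dotProduct_comm z a]
      ring
    · rw [prod_pdf]; positivity
  · simp_rw [prod_pdf]
    exact (by fun_prop : Continuous fun z : Fin n → ℝ => ((Real.sqrt (2 * Real.pi))⁻¹) ^ n *
      Real.exp (-(1/2) * (z ⬝ᵥ z))).measurable.ennreal_ofReal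
  · exact (by fun_prop : Measurable fun y : ℝ => ENNReal.ofReal
      (min 1 (Real.exp (-y - a ⬝ᵥ a / 2)))).comp hdm

/-- A translated piece of the overlap is dominated by the Gaussian. -/
lemma marg {n : ℕ} (S : Matrix (Fin n) (Fin n) ℝ) (μ m m' : Fin n → ℝ)
    (f : (Fin n → ℝ) → ℝ) (hm : m = m' - μ) (hf : ∀ w, f w ≤ gaussDensity m S w)
    (A : Set (Fin n → ℝ)) (hA : MeasurableSet A) :
    (volume.withDensity fun w => ENNReal.ofReal (f w)) ((fun w => μ + w) ⁻¹' A)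
      ≤ gaussMeasure m' S A := by
  have hA' : MeasurableSet ((fun w => μ + w) ⁻¹' A) := hA.preimage (by fun_prop)
  rw [gaussMeasure, withDensity_apply _ hA, withDensity_apply _ hA']
  rw [← (measurePreserving_add_left volume μ).setLIntegral_comp_preimage hA
    (gaussDensity_meas _ _).ennreal_ofReal]
  refine lintegral_mono fun w => ENNReal.ofReal_le_ofReal ((hf w).trans_eq ?_)
  subst hm
  simp only [gaussDensity]
  have : w - (m' - μ) = μ + w - m' := by abel
  rw [this]

/-- **The sub-probability coupling of two Gaussians over the diagonal (Theorem 5).**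
With `γ := μ − μ̂`, the pushforward `v` of the measure with density
`min(g_{0,S}, g_{−γ,S})` under `w ↦ (μ + w, μ + w)` is a sub-probability coupling of
`N(μ̂, S)` and `N(μ, S)` over the diagonal with respect to
`δ := 1 − 2 Φ(−½ √(γᵀ S⁻¹ γ))`. -/
theorem gauss_subprob_coupling {n : ℕ} (hn : 1 ≤ n)
    (S : Matrix (Fin n) (Fin n) ℝ) (hS : S.PosDef)
    (μhat μ : Fin n → ℝ) :
    let γ : Fin n → ℝ := μ - μhat
    let ρ : Measure (Fin n → ℝ) :=
      volume.withDensity fun w =>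
        ENNReal.ofReal (min (gaussDensity 0 S w) (gaussDensity (-γ) S w))
    let v : Measure ((Fin n → ℝ) × (Fin n → ℝ)) := ρ.map fun w => (μ + w, μ + w)
    let R : Set ((Fin n → ℝ) × (Fin n → ℝ)) := {q | q.1 = q.2}
    v univ = v R ∧
    v R = ENNReal.ofReal (2 * stdNormalCdf (-(1 / 2) * Real.sqrt (γ ⬝ᵥ (S⁻¹ *ᵥ γ)))) ∧
    (∀ A : Set (Fin n → ℝ), MeasurableSet A →
      v (A ×ˢ (univ : Set (Fin n → ℝ))) ≤ gaussMeasure μhat S A) ∧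
    (∀ A : Set (Fin n → ℝ), MeasurableSet A →
      v ((univ : Set (Fin n → ℝ)) ×ˢ A) ≤ gaussMeasure μ S A) := by
  intro γ ρ v R
  have hmap : Measurable fun w : Fin n → ℝ => (μ + w, μ + w) := by fun_prop
  have hR : MeasurableSet R := measurableSet_eq_fun measurable_fst measurable_snd
  have hRu : v R = ρ univ := by
    rw [Measure.map_apply hmap hR]
    congr 1
    ext w
    simp [R]
  have huu : v univ = ρ univ := by
    rw [Measure.map_apply hmap MeasurableSet.univ, preimage_univ]
  refine ⟨huu.trans hRu.symm, ?_, fun A hA => ?_, fun A hA => ?_⟩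
  · rw [hRu, withDensity_apply _ MeasurableSet.univ, Measure.restrict_univ]
    exact total S hS γ
  · rw [Measure.map_apply hmap (hA.prod MeasurableSet.univ), mk_preimage_prod, preimage_univ,
      inter_univ]
    exact marg S μ (-γ) μhat _ (by simp [γ]) (fun w => min_le_right _ _) A hA
  · rw [Measure.map_apply hmap (MeasurableSet.univ.prod hA), mk_preimage_prod, preimage_univ,
      univ_inter]
    exact marg S μ 0 μ _ (by simp) (fun w => min_le_left _ _) A hA
end

section
/- Let m, n ≥ 1, let φ ∈ ℝᵐ, Δ ∈ ℝ^{m×n}, let Σ ∈ ℝ^{n×n} and Σ_N ∈ ℝ^{mn×mn} be symmetric positive-definite matrices, and let c ≥ 0. Write vec(Δ) ∈ ℝ^{mn} for the column-stacking of Δ and ‖·‖ for the spectral norm (operator norm induced by the Euclidean norm) on matrices and the Euclidean norm on vectors. If vec(Δ)ᵀ Σ_N⁻¹ vec(Δ) ≤ c, then φᵀ Δ Σ⁻¹ Δᵀ φ ≤ ‖φ‖² · ‖Σ⁻¹‖ · ‖Σ_N‖ · c. -/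
open Matrix

/-- The spectral norm (operator norm induced by the Euclidean norms) of a real matrix. -/
noncomputable def specNorm {a b : Type*} [Fintype a] [Fintype b] [DecidableEq b]
    (M : Matrix a b ℝ) : ℝ :=
  ‖LinearMap.toContinuousLinearMap (Matrix.toEuclideanLin M)‖

/-- The Euclidean norm of a real vector. -/
noncomputable def euclNorm {ι : Type*} [Fintype ι] (x : ι → ℝ) : ℝ :=
  Real.sqrt (x ⬝ᵥ x)

/-- The column-stacking (vectorization) of an `m × n` matrix, indexed by
(column, row) pairs: `vecOf Δ (j, i) = Δ i j`. -/
def vecOf {m n : ℕ} (Δ : Matrix (Fin m) (Fin n) ℝ) : Fin n × Fin m → ℝ :=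
  fun q => Δ q.2 q.1

theorem aux_quad {ι : Type*} [Fintype ι] [DecidableEq ι] (M : Matrix ι ι ℝ) (x : ι → ℝ) :
    x ⬝ᵥ (M *ᵥ x) ≤ specNorm M * (x ⬝ᵥ x) := by
  have h1 := real_inner_le_norm (WithLp.toLp 2 (M *ᵥ x)) (WithLp.toLp 2 x)
  have h2 := (LinearMap.toContinuousLinearMap (Matrix.toEuclideanLin M)).le_opNorm
    (WithLp.toLp 2 x)
  have h3 : (LinearMap.toContinuousLinearMap (Matrix.toEuclideanLin M)) (WithLp.toLp 2 x)
      = WithLp.toLp 2 (M *ᵥ x) := by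
    simp [Matrix.toLpLin_toLp]
  rw [h3] at h2
  have h4 : inner ℝ (WithLp.toLp 2 (M *ᵥ x)) (WithLp.toLp 2 x) = x ⬝ᵥ (M *ᵥ x) := by
    simp [EuclideanSpace.inner_toLp_toLp]
  have h5 : ‖WithLp.toLp 2 x‖ * ‖WithLp.toLp 2 x‖ = x ⬝ᵥ x := by
    rw [← real_inner_self_eq_norm_mul_norm, EuclideanSpace.inner_toLp_toLp, star_trivial]
  rw [h4] at h1
  calc _ ≤ _ := h1
    _ ≤ (specNorm M * ‖WithLp.toLp 2 x‖) * ‖WithLp.toLp 2 x‖ :=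
      mul_le_mul_of_nonneg_right h2 (norm_nonneg _)
    _ = _ := by rw [mul_assoc, h5]

theorem aux_inv {ι : Type*} [Fintype ι] [DecidableEq ι] (M : Matrix ι ι ℝ) (hM : M.PosDef)
    (v : ι → ℝ) : v ⬝ᵥ v ≤ specNorm M * (v ⬝ᵥ (M⁻¹ *ᵥ v)) := by
  have hK : 0 ≤ specNorm M := norm_nonneg _
  have hq := aux_quad M v
  set K := specNorm M
  set w := M⁻¹ *ᵥ v with hw
  have hMw : M *ᵥ w = v := by
    rw [hw, Matrix.mulVec_mulVec, Matrix.mul_nonsing_inv _ hM.det_pos.ne'.isUnit,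
      Matrix.one_mulVec]
  have hMt : Mᵀ = M := by
    have := hM.isHermitian.eq
    rwa [Matrix.conjTranspose_eq_transpose_of_trivial] at this
  have hsym : w ⬝ᵥ (M *ᵥ v) = v ⬝ᵥ v := by
    rw [Matrix.dotProduct_mulVec, ← Matrix.mulVec_transpose, hMt, hMw]
  rcases hK.eq_or_lt with h0 | hpos
  · by_cases hv : v = 0
    · simp [hv]
    · have := hM.dotProduct_mulVec_pos hv
      rw [star_trivial] at this
      rw [← h0] at hq
      linarith
  · have := hM.posSemidef.dotProduct_mulVec_nonneg (K • w - v)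
    rw [star_trivial] at this
    simp only [Matrix.mulVec_sub, Matrix.mulVec_smul, hMw, sub_dotProduct, dotProduct_sub,
      smul_dotProduct, dotProduct_smul, smul_eq_mul, hsym] at this
    rw [dotProduct_comm w v] at this
    have h6 : 0 ≤ K * (K * (v ⬝ᵥ w) - v ⬝ᵥ v) := by linarith
    have := nonneg_of_mul_nonneg_right h6 hpos
    linarith

theorem aux_cs {m n : ℕ} (φ : Fin m → ℝ) (Δ : Matrix (Fin m) (Fin n) ℝ) :
    (Δᵀ *ᵥ φ) ⬝ᵥ (Δᵀ *ᵥ φ) ≤ (φ ⬝ᵥ φ) * (vecOf Δ ⬝ᵥ vecOf Δ) := by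
  simp only [dotProduct, Matrix.mulVec, vecOf, Fintype.sum_prod_type, Matrix.transpose_apply]
  rw [Finset.mul_sum]
  refine Finset.sum_le_sum fun j _ => ?_
  have := Finset.sum_mul_sq_le_sq_mul_sq Finset.univ (fun i => Δ i j) φ
  simp only [sq] at this
  rw [mul_comm (∑ i, φ i * φ i)]
  exact this

/-- **Quadratic-form bound over the credible ellipsoid (Appendix A.4).**
If `vec(Δ)ᵀ Σ_N⁻¹ vec(Δ) ≤ c`, then
`φᵀ Δ Σ⁻¹ Δᵀ φ ≤ ‖φ‖² ‖Σ⁻¹‖ ‖Σ_N‖ c`. -/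
theorem quadform_credible_bound {m n : ℕ} (hm : 1 ≤ m) (hn : 1 ≤ n)
    (φ : Fin m → ℝ) (Δ : Matrix (Fin m) (Fin n) ℝ)
    (S : Matrix (Fin n) (Fin n) ℝ) (hS : S.PosDef)
    (SN : Matrix (Fin n × Fin m) (Fin n × Fin m) ℝ) (hSN : SN.PosDef)
    (c : ℝ) (hc : 0 ≤ c)
    (h : vecOf Δ ⬝ᵥ (SN⁻¹ *ᵥ vecOf Δ) ≤ c) :
    φ ⬝ᵥ (Δ *ᵥ (S⁻¹ *ᵥ (Δᵀ *ᵥ φ))) ≤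
      euclNorm φ ^ 2 * specNorm S⁻¹ * specNorm SN * c := by
  have hφ : euclNorm φ ^ 2 = φ ⬝ᵥ φ := Real.sq_sqrt (
    Finset.sum_nonneg fun i _ => mul_self_nonneg (φ i))
  have h0 : 0 ≤ φ ⬝ᵥ φ := by rw [← hφ]; positivity
  have hA : 0 ≤ specNorm S⁻¹ := norm_nonneg _
  have hB : 0 ≤ specNorm SN := norm_nonneg _
  rw [hφ, Matrix.dotProduct_mulVec, ← Matrix.mulVec_transpose]
  calc _ ≤ specNorm S⁻¹ * ((Δᵀ *ᵥ φ) ⬝ᵥ (Δᵀ *ᵥ φ)) := aux_quad _ _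
    _ ≤ specNorm S⁻¹ * ((φ ⬝ᵥ φ) * (specNorm SN * c)) := by
      refine mul_le_mul_of_nonneg_left ((aux_cs φ Δ).trans ?_) hA
      exact mul_le_mul_of_nonneg_left
        ((aux_inv SN hSN _).trans (mul_le_mul_of_nonneg_left h hB)) h0
    _ = _ := by ring
end
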